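/- Let L be a complete lattice. The following are equivalent: (1) L is compactly generated, i.e. every element is the supremum of the compact elements below it; (2) every element of L is the supremum of some set of elements x each of which is locally compact, meaning that the top element of the complete lattice {y ∈ L | y ≤ x} is a compact element of that lattice, AND binary meets in L distribute over suprema of directed sets: for every a ∈ L and every directed subset S ⊆ L, a ⊓ sSup S = ⨆_{s∈S} (a ⊓ s). -/

import Mathlib

/-- A complete lattice is compactly generated iff every element is a supremum of
locally compact elements (elements `x` such that `⊤` is compact in `Set.Iic x`)
and binary meets distribute over directed suprema. -/
theorem stmt3 {L : Type*} [CompleteLattice L] :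
    (∀ a : L, a = sSup {c : L | IsCompactElement c ∧ c ≤ a}) ↔
    ((∀ a : L, ∃ S : Set L,
        (∀ x ∈ S, IsCompactElement (⊤ : Set.Iic x)) ∧ a = sSup S) ∧
      ∀ (a : L) (S : Set L), DirectedOn (· ≤ ·) S →
        a ⊓ sSup S = ⨆ s ∈ S, a ⊓ s) := by
  constructor
  · intro h
    haveI : IsCompactlyGenerated L := ⟨fun a => ⟨_, fun x hx => hx.1, (h a).symm⟩⟩
    refine ⟨fun a => ⟨_, ?_, h a⟩, fun a S hS => hS.inf_sSup_eq⟩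
    rintro c ⟨hc, -⟩ s u hne hdir hu htop
    obtain ⟨_, ⟨y, hy, rfl⟩, hcy⟩ := hc (Subtype.val '' s) u.1 (hne.image _) (by
        rintro _ ⟨y, hy, rfl⟩ _ ⟨z, hz, rfl⟩
        obtain ⟨w, hw, h1, h2⟩ := hdir y hy z hz
        exact ⟨w.1, ⟨w, hw, rfl⟩, h1, h2⟩)
      (by
        constructor
        · rintro _ ⟨y, hy, rfl⟩
          exact hu.1 hy
        · intro b hb
          have h1 : u ≤ (⟨b ⊓ c, inf_le_right⟩ : Set.Iic c) :=
            hu.2 (fun y hy => le_inf (hb ⟨y, hy, rfl⟩) y.2)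
          exact le_trans h1 inf_le_left)
      htop
    exact ⟨y, hy, hcy⟩
  · rintro ⟨h1, h2⟩ a
    obtain ⟨S, hS, rfl⟩ := h1 a
    refine le_antisymm (sSup_le_sSup fun x hx => ⟨?_, le_sSup hx⟩) (sSup_le fun c hc => hc.2)
    intro s u hne hdir hu hxu
    have key := h2 x s hdir
    rw [hu.sSup_eq, inf_eq_left.2 hxu] at key
    let f : L → Set.Iic x := fun y => ⟨x ⊓ y, inf_le_left⟩
    obtain ⟨_, ⟨y, hy, rfl⟩, hxy⟩ := hS x hx (f '' s) ⊤ (hne.image _) (by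
        rintro _ ⟨y, hy, rfl⟩ _ ⟨z, hz, rfl⟩
        obtain ⟨w, hw, h1, h2⟩ := hdir y hy z hz
        exact ⟨f w, ⟨w, hw, rfl⟩, inf_le_inf_left x h1, inf_le_inf_left x h2⟩)
      (by
        refine ⟨fun _ _ => le_top, fun b hb => ?_⟩
        have h3 : x ≤ b.1 := key.le.trans (iSup₂_le fun y hy => hb ⟨y, hy, rfl⟩)
        exact h3)
      le_rfl
    have h4 : x ≤ x ⊓ y := hxy
    exact ⟨y, hy, h4.trans inf_le_right⟩
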